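/- Let d,k ≥ 1 and let t be a binary tree. Then: (i) t is (d;k)-minimal if and only if t avoids comb_k^1 at every left depth at least d−1; (ii) t is (d;k)-maximal if and only if t avoids comb_{k+1} at every left depth at least d−1. -/

import Mathlib

/-- Full binary trees (every internal node has exactly two children). -/
inductive BTree : Type
  | leaf : BTree
  | node : BTree → BTree → BTree
deriving DecidableEq

namespace BTree

/-- Number of leaves of a full binary tree. -/
def numLeaves : BTree → ℕ
  | leaf => 1
  | node l r => l.numLeaves + r.numLeaves

/-- The list of pairs (left depth, right depth) of the leaves, in preorder. -/
def leafDepths : BTree → List (ℕ × ℕ)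
  | leaf => [(0, 0)]
  | node l r =>
      (l.leafDepths.map fun p => (p.1 + 1, p.2)) ++ (r.leafDepths.map fun p => (p.1, p.2 + 1))

/-- The left depth sequence `ld(t)` of the leaves of `t`, in preorder. -/
def ld (t : BTree) : List ℕ := t.leafDepths.map Prod.fst

/-- The right depth sequence `rd(t)` of the leaves of `t`, in preorder. -/
def rd (t : BTree) : List ℕ := t.leafDepths.map Prod.snd

end BTree

/-- `b ~^d c` : the sequences have equal length and agree at every position where
either entry is `< d`. -/
def DepthEq (d : ℕ) : List ℕ → List ℕ → Prop :=
  List.Forall₂ (fun a b => min a b < d → a = b)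

/-- `b ~_k c` : entrywise congruence mod `k` (and equal length). -/
def ModListEq (k : ℕ) : List ℕ → List ℕ → Prop :=
  List.Forall₂ (fun a b => a % k = b % k)

/-- The relation `t ~ t'` iff `ld(t) ~^d ld(t')` and `rd(t) ~^e rd(t')`. -/
def DeRel (d e : ℕ) (t t' : BTree) : Prop :=
  DepthEq d t.ld t'.ld ∧ DepthEq e t.rd t'.rd

/-- The relation `t ~ t'` iff `ld(t) ~_k^d ld(t')` (i.e. `ld(t) ~_k ld(t')` and
`ld(t) ~^d ld(t')`). -/
def DkRel (d k : ℕ) (t t' : BTree) : Prop :=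
  ModListEq k t.ld t'.ld ∧ DepthEq d t.ld t'.ld

/-- `T_n`: full binary trees with `n+1` leaves. -/
def Tn (n : ℕ) : Type := {t : BTree // t.numLeaves = n + 1}

/-- `C^{d,e}_n`: the number of equivalence classes of the relation `DeRel d e` on `T_n`. -/
noncomputable def Cde (d e n : ℕ) : ℕ :=
  Nat.card (Quot (fun t t' : Tn n => DeRel d e t.1 t'.1))

/-- `C^d_{k,n}`: the number of equivalence classes of `ld(t) ~_k^d ld(t')` on `T_n`. -/
noncomputable def Cdk (d k n : ℕ) : ℕ :=
  Nat.card (Quot (fun t t' : Tn n => DkRel d k t.1 t'.1))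

/-- Directions to a left or right child. -/
inductive Dir : Type
  | L : Dir
  | R : Dir
deriving DecidableEq

/-- The maximal subtree rooted at the node at position `p` (if such a node exists). -/
def subtreeAt : BTree → List Dir → Option BTree
  | t, [] => some t
  | BTree.leaf, _ :: _ => none
  | BTree.node l _, Dir.L :: p => subtreeAt l p
  | BTree.node _ r, Dir.R :: p => subtreeAt r p

/-- Replace the maximal subtree rooted at position `p` by `s` (if the position exists). -/
def replaceAt : BTree → List Dir → BTree → Option BTree
  | _, [], s => some s
  | BTree.leaf, _ :: _, _ => none
  | BTree.node l r, Dir.L :: p, s => (replaceAt l p s).map fun l' => BTree.node l' r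
  | BTree.node l r, Dir.R :: p, s => (replaceAt r p s).map fun r' => BTree.node l r'

/-- `leftAssoc t₀ [t₁,…,t_m] = t₀ ∧ t₁ ∧ ⋯ ∧ t_m` with `∧` performed left to right. -/
def leftAssoc : BTree → List BTree → BTree := List.foldl BTree.node

/-- `t'` is obtained from `t` by a right `k`-rotation at the node at position `p`:
the maximal subtree `t₀ ∧ t₁ ∧ ⋯ ∧ t_{k+1}` rooted there (with `∧` performed left to
right) is replaced by `t₀ ∧ (t₁ ∧ ⋯ ∧ t_{k+1})`.  The left depth of that node is
`p.count Dir.L`. -/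
def IsRightKRot (k : ℕ) (p : List Dir) (t t' : BTree) : Prop :=
  ∃ (t₀ t₁ : BTree) (rest : List BTree), rest.length = k ∧
    subtreeAt t p = some (leftAssoc t₀ (t₁ :: rest)) ∧
    replaceAt t p (BTree.node t₀ (leftAssoc t₁ rest)) = some t'

/-- `IsTopOf s u`: `s` is a subtree of `u` rooted at the root of `u`. -/
def IsTopOf : BTree → BTree → Prop
  | BTree.leaf, _ => True
  | BTree.node l r, BTree.node l' r' => IsTopOf l l' ∧ IsTopOf r r'
  | BTree.node _ _, BTree.leaf => False

/-- `t` contains `s` at left depth `δ`: `t` has a subtree equal to `s` rooted at a node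
of left depth `δ`. -/
def ContainsAt (t s : BTree) (δ : ℕ) : Prop :=
  ∃ (p : List Dir) (u : BTree), subtreeAt t p = some u ∧ p.count Dir.L = δ ∧ IsTopOf s u

/-- `t` avoids `s` at left depth `δ`. -/
def AvoidsAt (t s : BTree) (δ : ℕ) : Prop := ¬ ContainsAt t s δ

/-- `comb_k`: the left-to-right `∧`-product of `k+1` single leaves. -/
def comb (k : ℕ) : BTree := leftAssoc BTree.leaf (List.replicate k BTree.leaf)

/-- `comb_k^1 := t₀ ∧ comb_k` with `t₀` a single leaf. -/
def comb1 (k : ℕ) : BTree := BTree.node BTree.leaf (comb k)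

/-- One left `k`-rotation step, at a node of left depth at least `d-1`, from `t` to `t'`. -/
def LeftRotStep (d k : ℕ) (t t' : BTree) : Prop :=
  ∃ p : List Dir, d - 1 ≤ p.count Dir.L ∧ IsRightKRot k p t' t

/-- The `(d;k)`-order: `s ≤ t` iff `s` is obtained from `t` by finitely many left
`k`-rotations at nodes of left depth at least `d-1`. -/
def dkLE (d k : ℕ) (s t : BTree) : Prop := Relation.ReflTransGen (LeftRotStep d k) t s

/-- `t` is `(d;k)`-minimal. -/
def dkMinimal (d k : ℕ) (t : BTree) : Prop := ∀ s, dkLE d k s t → s = t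

/-- `t` is `(d;k)`-maximal. -/
def dkMaximal (d k : ℕ) (t : BTree) : Prop := ∀ s, dkLE d k t s → s = t

/-!
A tree admits a left `k`-rotation at a node exactly when the maximal subtree there has the form
`t₀ ∧ (t₁ ∧ ⋯ ∧ t_{k+1})`, i.e. has `comb_k^1` as a subtree at its root; it admits a right
`k`-rotation exactly when that subtree has the form `t₀ ∧ ⋯ ∧ t_{k+1}`, i.e. has `comb_{k+1}` at
its root.  For `k ≥ 1` a rotation always changes the tree, since the left maximal subtree of
`t₀ ∧ ⋯ ∧ t_{k+1}` has more leaves than `t₀`.  Hence extremality in the order means that no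
rotation in the relevant direction is possible.
-/

theorem forall_reflTransGen_imp_eq_iff {α : Type*} {r : α → α → Prop} {x : α} (hx : ¬ r x x) :
    (∀ y, Relation.ReflTransGen r x y → y = x) ↔ ¬ ∃ y, r x y := by
  constructor
  · rintro h ⟨y, hxy⟩
    obtain rfl := h y (.single hxy)
    exact hx hxy
  · intro h y
    exact (Relation.reflTransGen_iff_eq (not_exists.mp h)).mp

section Rotations

variable {d k m : ℕ} {p : List Dir} {s t a b u : BTree} {l : List BTree}

namespace BTree

theorem numLeaves_pos (t : BTree) : 0 < t.numLeaves := by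
  induction t with
  | leaf => exact Nat.one_pos
  | node l r ihl _ => exact Nat.add_pos_left ihl _

end BTree

theorem leftAssoc_cons (a b : BTree) (l : List BTree) :
    leftAssoc a (b :: l) = leftAssoc (BTree.node a b) l :=
  rfl

theorem leftAssoc_concat (a b : BTree) (l : List BTree) :
    leftAssoc a (l ++ [b]) = BTree.node (leftAssoc a l) b :=
  List.foldl_concat BTree.node a b l

theorem numLeaves_leftAssoc (a : BTree) (l : List BTree) :
    (leftAssoc a l).numLeaves = a.numLeaves + (l.map BTree.numLeaves).sum := by
  induction l generalizing a with
  | nil => rfl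
  | cons b l ih =>
    rw [leftAssoc_cons, ih, BTree.numLeaves, List.map_cons, List.sum_cons, Nat.add_assoc]

theorem leftAssoc_cons_ne_self (a b : BTree) (l : List BTree) : leftAssoc a (b :: l) ≠ a := by
  intro h
  have hleaves := congrArg BTree.numLeaves h
  rw [numLeaves_leftAssoc, List.map_cons, List.sum_cons] at hleaves
  have hb := b.numLeaves_pos
  lia

theorem leftAssoc_cons_ne_node_leftAssoc (a b : BTree) (hl : l ≠ []) :
    leftAssoc a (b :: l) ≠ BTree.node a (leftAssoc b l) := by
  obtain ⟨l, c, rfl⟩ := (List.eq_nil_or_concat' l).resolve_left hl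
  rw [← List.cons_append, leftAssoc_concat]
  exact fun h => leftAssoc_cons_ne_self a b l (BTree.node.inj h).1

theorem exists_replaceAt_eq_some (h : subtreeAt t p = some a) (b : BTree) :
    ∃ s, replaceAt t p b = some s := by
  fun_induction subtreeAt t p <;> simp_all [replaceAt]

theorem subtreeAt_of_replaceAt_eq_some (h : replaceAt t p b = some s) :
    subtreeAt s p = some b := by
  fun_induction replaceAt t p b generalizing s with
  | case1 => rw [subtreeAt, Option.some.inj h]
  | case2 => cases h
  | case3 l r p b ih | case4 l r p b ih =>
    obtain ⟨c, hc, rfl⟩ := Option.map_eq_some_iff.mp h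
    exact ih hc

theorem replaceAt_of_replaceAt_eq_some (ha : subtreeAt t p = some a)
    (hs : replaceAt t p b = some s) : replaceAt s p a = some t := by
  fun_induction replaceAt t p b generalizing s with
  | case1 => rw [replaceAt, ← ha, subtreeAt]
  | case2 => cases hs
  | case3 l r p b ih | case4 l r p b ih =>
    obtain ⟨c, hc, rfl⟩ := Option.map_eq_some_iff.mp hs
    rw [replaceAt, ih ha hc, Option.map_some]

theorem subtreeAt_and_replaceAt_eq_some_comm :
    subtreeAt t p = some a ∧ replaceAt t p b = some s ↔
      subtreeAt s p = some b ∧ replaceAt s p a = some t := by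
  constructor <;> rintro ⟨hsub, hrep⟩ <;>
    exact ⟨subtreeAt_of_replaceAt_eq_some hrep, replaceAt_of_replaceAt_eq_some hsub hrep⟩

theorem comb_succ (k : ℕ) : comb (k + 1) = BTree.node (comb k) BTree.leaf := by
  rw [comb, List.replicate_succ', leftAssoc_concat, comb]

theorem isTopOf_comb_iff :
    IsTopOf (comb k) u ↔ ∃ a l, l.length = k ∧ u = leftAssoc a l := by
  induction k generalizing u with
  | zero => exact iff_of_true trivial ⟨u, [], rfl, rfl⟩
  | succ k ih =>
    rw [comb_succ]
    constructor
    · intro h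
      cases u with
      | leaf => exact h.elim
      | node u c =>
        obtain ⟨a, l, rfl, rfl⟩ := ih.mp h.1
        exact ⟨a, l ++ [c], List.length_append, (leftAssoc_concat a c l).symm⟩
    · rintro ⟨a, l, hl, rfl⟩
      obtain ⟨l, c, rfl⟩ := (List.eq_nil_or_concat' l).resolve_left
        (List.ne_nil_of_length_eq_add_one hl)
      rw [leftAssoc_concat]
      exact ⟨ih.mpr ⟨a, l, by simpa using hl, rfl⟩, trivial⟩

theorem isTopOf_comb_succ_iff :
    IsTopOf (comb (k + 1)) u ↔ ∃ a b l, l.length = k ∧ u = leftAssoc a (b :: l) := by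
  rw [isTopOf_comb_iff]
  constructor
  · rintro ⟨a, l, hl, rfl⟩
    obtain ⟨b, l, rfl⟩ := List.exists_cons_of_length_eq_add_one hl
    exact ⟨a, b, l, Nat.succ.inj hl, rfl⟩
  · rintro ⟨a, b, l, rfl, rfl⟩
    exact ⟨a, b :: l, rfl, rfl⟩

theorem isTopOf_comb1_iff :
    IsTopOf (comb1 k) u ↔ ∃ a b l, l.length = k ∧ u = BTree.node a (leftAssoc b l) := by
  constructor
  · intro h
    cases u with
    | leaf => exact h.elim
    | node a c =>
      obtain ⟨b, l, hl, rfl⟩ := isTopOf_comb_iff.mp h.2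
      exact ⟨a, b, l, hl, rfl⟩
  · rintro ⟨a, b, l, hl, rfl⟩
    exact ⟨trivial, isTopOf_comb_iff.mpr ⟨b, l, hl, rfl⟩⟩

theorem exists_isRightKRot_from_iff :
    (∃ s, IsRightKRot k p t s) ↔ ∃ u, subtreeAt t p = some u ∧ IsTopOf (comb (k + 1)) u := by
  simp only [isTopOf_comb_succ_iff]
  constructor
  · rintro ⟨s, a, b, l, hl, hsub, -⟩
    exact ⟨_, hsub, a, b, l, hl, rfl⟩
  · rintro ⟨_, hsub, a, b, l, hl, rfl⟩
    obtain ⟨s, hs⟩ := exists_replaceAt_eq_some hsub (BTree.node a (leftAssoc b l))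
    exact ⟨s, a, b, l, hl, hsub, hs⟩

theorem exists_isRightKRot_to_iff :
    (∃ s, IsRightKRot k p s t) ↔ ∃ u, subtreeAt t p = some u ∧ IsTopOf (comb1 k) u := by
  simp only [isTopOf_comb1_iff, IsRightKRot, subtreeAt_and_replaceAt_eq_some_comm (s := t)]
  constructor
  · rintro ⟨s, a, b, l, hl, hsub, -⟩
    exact ⟨_, hsub, a, b, l, hl, rfl⟩
  · rintro ⟨_, hsub, a, b, l, hl, rfl⟩
    obtain ⟨s, hs⟩ := exists_replaceAt_eq_some hsub (leftAssoc a (b :: l))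
    exact ⟨s, a, b, l, hl, hsub, hs⟩

theorem not_isRightKRot_self (hk : k ≠ 0) : ¬ IsRightKRot k p t t := by
  rintro ⟨a, b, l, rfl, hsub, hrep⟩
  have hsub' := subtreeAt_of_replaceAt_eq_some hrep
  exact leftAssoc_cons_ne_node_leftAssoc a b (List.ne_nil_of_length_pos (Nat.pos_of_ne_zero hk))
    (Option.some.inj (hsub.symm.trans hsub'))

theorem not_leftRotStep_self (hk : k ≠ 0) : ¬ LeftRotStep d k t t :=
  fun ⟨_, _, h⟩ => not_isRightKRot_self hk h

theorem exists_containsAt_iff :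
    (∃ δ, m ≤ δ ∧ ContainsAt t s δ) ↔
      ∃ p : List Dir, m ≤ p.count Dir.L ∧ ∃ u, subtreeAt t p = some u ∧ IsTopOf s u := by
  constructor
  · rintro ⟨_, hm, p, u, hu, rfl, hs⟩
    exact ⟨p, hm, u, hu, hs⟩
  · rintro ⟨p, hm, u, hu, hs⟩
    exact ⟨_, hm, p, u, hu, rfl, hs⟩

theorem forall_avoidsAt_iff :
    (∀ δ, m ≤ δ → AvoidsAt t s δ) ↔ ¬ ∃ δ, m ≤ δ ∧ ContainsAt t s δ := by
  simp only [AvoidsAt, not_exists, not_and]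

theorem exists_leftRotStep_from_iff :
    (∃ s, LeftRotStep d k t s) ↔ ∃ δ, d - 1 ≤ δ ∧ ContainsAt t (comb1 k) δ := by
  simp only [LeftRotStep, exists_comm (α := BTree), exists_and_left,
    exists_isRightKRot_to_iff, exists_containsAt_iff]

theorem exists_leftRotStep_to_iff :
    (∃ s, LeftRotStep d k s t) ↔ ∃ δ, d - 1 ≤ δ ∧ ContainsAt t (comb (k + 1)) δ := by
  simp only [LeftRotStep, exists_comm (α := BTree), exists_and_left,
    exists_isRightKRot_from_iff, exists_containsAt_iff]

theorem dkMinimal_iff_not_exists_leftRotStep (hk : k ≠ 0) :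
    dkMinimal d k t ↔ ¬ ∃ s, LeftRotStep d k t s :=
  forall_reflTransGen_imp_eq_iff (not_leftRotStep_self hk)

theorem dkMaximal_iff_not_exists_leftRotStep (hk : k ≠ 0) :
    dkMaximal d k t ↔ ¬ ∃ s, LeftRotStep d k s t := by
  simp only [dkMaximal, dkLE, ← Relation.reflTransGen_swap (a := t)]
  exact forall_reflTransGen_imp_eq_iff (not_leftRotStep_self hk)

end Rotations

/-- for `d,k ≥ 1` and any binary tree `t`:
(i) `t` is `(d;k)`-minimal iff `t` avoids `comb_k^1` at every left depth at least `d-1`;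
(ii) `t` is `(d;k)`-maximal iff `t` avoids `comb_{k+1}` at every left depth at least `d-1`. -/
theorem stmt10 (d k : ℕ) (hd : 1 ≤ d) (hk : 1 ≤ k) (t : BTree) :
    (dkMinimal d k t ↔ ∀ δ, d - 1 ≤ δ → AvoidsAt t (comb1 k) δ) ∧
    (dkMaximal d k t ↔ ∀ δ, d - 1 ≤ δ → AvoidsAt t (comb (k + 1)) δ) := by
  have hk0 : k ≠ 0 := Nat.one_le_iff_ne_zero.mp hk
  constructor
  · rw [dkMinimal_iff_not_exists_leftRotStep hk0, exists_leftRotStep_from_iff, forall_avoidsAt_iff]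
  · rw [dkMaximal_iff_not_exists_leftRotStep hk0, exists_leftRotStep_to_iff, forall_avoidsAt_iff]
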